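/- Let Ω ⊂ ℝⁿ be an open bounded set with the Lebesgue measure, let (X,d) be a locally compact Hadamard space, and let p ∈ [1,∞). For every Lebesgue-measurable f : Ω → X with ∫_Ω d(f(ω),a)^p dω < ∞ for some a ∈ X, and every ε > 0, there exists a uniformly continuous map h : Ω → X which is constant outside a compact subset of Ω and satisfies ∫_Ω d(f(ω),h(ω))^p dω < ε. -/

import Mathlib

open MeasureTheory Set Filter
open scoped Topology ENNReal

/-- A connected locally compact paracompact Hausdorff space is σ-compact. -/
theorem sigmaCompactSpace_of_preconnected_of_paracompact {X : Type*} [TopologicalSpace X]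
    [T2Space X] [PreconnectedSpace X] [LocallyCompactSpace X] [ParacompactSpace X] :
    SigmaCompactSpace X := by
  rcases isEmpty_or_nonempty X with hX | ⟨⟨a⟩⟩
  · infer_instance
  choose N hNc hN using fun x : X ↦ exists_compact_mem_nhds x
  obtain ⟨V, hVo, hVc, hVf, hVN⟩ := precise_refinement (fun x ↦ interior (N x))
    (fun _ ↦ isOpen_interior)
    (iUnion_eq_univ_iff.2 fun x ↦ ⟨x, mem_interior_iff_mem_nhds.2 (hN x)⟩)
  have hcl (i : X) : IsCompact (closure (V i)) :=
    (hNc i).of_isClosed_subset isClosed_closure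
      (closure_minimal ((hVN i).trans interior_subset) (hNc i).isClosed)
  let step (s : Set X) : Set X := ⋃ i ∈ {i | (V i ∩ s).Nonempty}, closure (V i)
  have hstep (s : Set X) (hs : IsCompact s) : IsCompact (step s) :=
    (hVf.finite_nonempty_inter_compact hs).isCompact_biUnion fun i _ ↦ hcl i
  have hVstep (s : Set X) (i : X) (hi : (V i ∩ s).Nonempty) : V i ⊆ step s :=
    subset_closure.trans (subset_biUnion_of_mem (u := fun i ↦ closure (V i)) hi)
  let K (n : ℕ) : Set X := step^[n] {a}
  have hK (n : ℕ) : IsCompact (K n) := by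
    induction n with
    | zero => exact isCompact_singleton
    | succ n ih =>
      simp only [K, Function.iterate_succ_apply'] at ih ⊢
      exact hstep _ ih
  have hVK (n : ℕ) (i : X) (hi : (V i ∩ K n).Nonempty) : V i ⊆ K (n + 1) := by
    simp only [K, Function.iterate_succ_apply'] at hi ⊢
    exact hVstep _ i hi
  have hV (x : X) : ∃ i, x ∈ V i := iUnion_eq_univ_iff.1 hVc x
  have hclopen : IsClopen (⋃ n, K n) := by
    constructor
    · refine isClosed_of_closure_subset fun x hx ↦ ?_
      obtain ⟨i, hi⟩ := hV x
      obtain ⟨y, hyV, hyK⟩ := mem_closure_iff.1 hx (V i) (hVo i) hi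
      obtain ⟨n, hn⟩ := mem_iUnion.1 hyK
      exact mem_iUnion.2 ⟨n + 1, hVK n i ⟨y, hyV, hn⟩ hi⟩
    · refine isOpen_iff_mem_nhds.2 fun x hx ↦ ?_
      obtain ⟨n, hn⟩ := mem_iUnion.1 hx
      obtain ⟨i, hi⟩ := hV x
      exact mem_of_superset ((hVo i).mem_nhds hi)
        ((hVK n i ⟨x, hi, hn⟩).trans (subset_iUnion K (n + 1)))
  refine isSigmaCompact_univ_iff.1 ?_
  rw [← hclopen.eq_univ ⟨a, mem_iUnion.2 ⟨0, mem_singleton a⟩⟩]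
  exact isSigmaCompact_iUnion_of_isCompact K hK

/-- In a space where every point `x` is joined to `a` by a path within distance `dist x a` of `a`,
prescribed values on finitely many disjoint compact sets extend to a continuous map
that equals `a` off a compact subset of a given open set. -/
theorem exists_continuous_eqOn_compacts {E X : Type*} [TopologicalSpace E] [T2Space E]
    [LocallyCompactSpace E] [PseudoMetricSpace X] {a : X}
    (hpath : ∀ x : X, ∃ γ : ℝ → X, γ 0 = a ∧ γ 1 = x ∧ ContinuousOn γ (Icc 0 1) ∧
      ∀ t ∈ Icc (0 : ℝ) 1, dist (γ t) a ≤ dist x a)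
    {M : ℝ} (hM : 0 ≤ M) (s : Finset X) (K : X → Set E) (hK : ∀ x, IsCompact (K x))
    (hd : Pairwise (Function.onFun Disjoint K)) (hsM : ∀ x ∈ s, dist x a ≤ M)
    {U : Set E} (hU : IsOpen U) (hKU : ∀ x ∈ s, K x ⊆ U) :
    ∃ (h : E → X) (C : Set E), Continuous h ∧ IsCompact C ∧ C ⊆ U ∧ (∀ ω ∉ C, h ω = a) ∧
      (∀ x ∈ s, ∀ ω ∈ K x, h ω = x) ∧ ∀ ω, dist (h ω) a ≤ M := by
  classical
  induction s using Finset.induction_on generalizing U with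
  | empty => exact ⟨fun _ ↦ a, ∅, continuous_const, isCompact_empty, empty_subset _, by simp,
      by simp, fun _ ↦ by simpa⟩
  | insert y s hy ih =>
    have hdisj : Disjoint (⋃ x ∈ s, K x) (K y) := by
      simp only [disjoint_iUnion_left]
      exact fun x hx ↦ hd fun hxy ↦ hy (hxy ▸ hx)
    obtain ⟨U₁, U₂, hU₁, hU₂, hs₁, hy₂, hU₁₂⟩ := SeparatedNhds.of_isCompact_isCompact
      (s.isCompact_biUnion fun x _ ↦ hK x) (hK y) hdisj
    obtain ⟨h₁, C₁, hc₁, hC₁, hCU₁, ha₁, hx₁, hb₁⟩ := ih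
      (fun x hx ↦ hsM x (Finset.mem_insert_of_mem hx)) (hU.inter hU₁)
      (fun x hx ↦ subset_inter (hKU x (Finset.mem_insert_of_mem hx))
        ((subset_biUnion_of_mem (u := K) (Finset.mem_coe.2 hx)).trans hs₁))
    obtain ⟨φ, hφ1, hφc, hφU, hφI⟩ := exists_continuousMap_one_of_isCompact_subset_isOpen (hK y)
      (hU.inter hU₂) (subset_inter (hKU y (Finset.mem_insert_self y s)) hy₂)
    obtain ⟨γ, hγ0, hγ1, hγc, hγb⟩ := hpath y
    have hout {ω : E} (hω : ω ∉ tsupport φ) : γ (φ ω) = a := by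
      rw [image_eq_zero_of_notMem_tsupport hω, hγ0]
    refine ⟨fun ω ↦ if ω ∈ tsupport φ then γ (φ ω) else h₁ ω, C₁ ∪ tsupport φ, ?_,
      hC₁.union hφc, union_subset (hCU₁.trans inter_subset_left) (hφU.trans inter_subset_left),
      ?_, ?_, ?_⟩
    · refine continuous_iff_continuousAt.2 fun ω ↦ ?_
      by_cases hω : ω ∈ U₂
      · have hcomp : Continuous fun ω ↦ γ (φ ω) := hγc.comp_continuous φ.continuous hφI
        refine hcomp.continuousAt.congr ?_
        filter_upwards [hU₂.mem_nhds hω] with z hz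
        split_ifs with hzφ
        · rfl
        · rw [hout hzφ, ha₁ z fun hzC ↦ disjoint_left.1 hU₁₂ (hCU₁ hzC).2 hz]
      · refine hc₁.continuousAt.congr ?_
        filter_upwards [(isClosed_tsupport φ).isOpen_compl.mem_nhds fun h ↦ hω (hφU h).2] with z hz
        rw [if_neg hz]
    · intro ω hω
      rw [mem_union, not_or] at hω
      exact (if_neg hω.2).trans (ha₁ ω hω.1)
    · intro x hx ω hω
      rcases Finset.mem_insert.1 hx with rfl | hx
      · have h1 : φ ω = 1 := hφ1 hω
        have hmem : ω ∈ tsupport φ := subset_tsupport _ (by simp [h1])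
        exact (if_pos hmem).trans (by rw [h1, hγ1])
      · have hωU₁ : ω ∈ U₁ := hs₁ (mem_biUnion hx hω)
        exact (if_neg fun h ↦ disjoint_left.1 hU₁₂ hωU₁ (hφU h).2).trans (hx₁ x hx ω hω)
    · intro ω
      dsimp only
      split_ifs
      · exact (hγb _ (hφI ω)).trans (hsM y (Finset.mem_insert_self y s))
      · exact hb₁ ω

/-- A simple map is approximated in `L^p` by continuous maps that are constant
off a compact subset of a given open set. -/
theorem exists_continuous_lintegral_edist_simpleFunc_lt {E X : Type*} [TopologicalSpace E]
    [T2Space E] [LocallyCompactSpace E] [MeasurableSpace E] [BorelSpace E] [PseudoMetricSpace X]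
    {a : X} (hpath : ∀ x : X, ∃ γ : ℝ → X, γ 0 = a ∧ γ 1 = x ∧ ContinuousOn γ (Icc 0 1) ∧
      ∀ t ∈ Icc (0 : ℝ) 1, dist (γ t) a ≤ dist x a)
    {μ : Measure E} [μ.InnerRegularCompactLTTop] {U : Set E} (hU : IsOpen U) (hμU : μ U ≠ ∞)
    {p : ℝ} (hp : 0 < p) (g : SimpleFunc E X) {δ : ℝ≥0∞} (hδ : δ ≠ 0) :
    ∃ (h : E → X) (C : Set E), Continuous h ∧ IsCompact C ∧ C ⊆ U ∧ (∀ ω ∉ C, h ω = a) ∧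
      ∫⁻ ω in U, edist (g ω) (h ω) ^ p ∂μ < δ := by
  classical
  obtain ⟨M, hM⟩ : ∃ M : ℝ, ∀ x ∈ g.range, dist x a ≤ M :=
    (g.range.image fun x ↦ dist x a).bddAbove.imp fun M hM x hx ↦
      hM (Finset.mem_coe.2 (Finset.mem_image_of_mem _ hx))
  set B : ℝ≥0∞ := ENNReal.ofReal (max M 0 + max M 0) ^ p with hB
  have hBtop : B ≠ ∞ := ENNReal.rpow_ne_top_of_nonneg hp.le ENNReal.ofReal_ne_top
  obtain ⟨η, hη, hηδ⟩ := ENNReal.exists_pos_mul_lt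
    (ENNReal.mul_ne_top (ENNReal.natCast_ne_top g.range.card) hBtop) hδ
  have hcpt (x : X) : ∃ K ⊆ g ⁻¹' {x} ∩ U, IsCompact K ∧ μ ((g ⁻¹' {x} ∩ U) \ K) < η :=
    ((g.measurableSet_fiber x).inter hU.measurableSet).exists_isCompact_sdiff_lt
      (measure_ne_top_of_subset inter_subset_right hμU) hη.ne'
  choose K hKg hK hKη using hcpt
  have hd : Pairwise (Function.onFun Disjoint K) := fun x y hxy ↦
    disjoint_left.2 fun ω hx hy ↦ hxy ((hKg x hx).1.symm.trans (hKg y hy).1)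
  obtain ⟨h, C, hc, hC, hCU, ha, hx, hb⟩ := exists_continuous_eqOn_compacts hpath
    (le_max_right M 0) g.range K hK hd (fun x hx ↦ (hM x hx).trans (le_max_left _ _)) hU
    fun x _ ↦ (hKg x).trans inter_subset_right
  refine ⟨h, C, hc, hC, hCU, ha, ?_⟩
  set R : Set E := ⋃ x ∈ g.range, (g ⁻¹' {x} ∩ U) \ K x
  have hR : MeasurableSet R := Finset.measurableSet_biUnion _ fun x _ ↦
    ((g.measurableSet_fiber x).inter hU.measurableSet).diff (hK x).measurableSet
  have hμR : μ R ≤ g.range.card * η := by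
    refine (measure_biUnion_finset_le _ _).trans ?_
    simpa using Finset.sum_le_sum fun x (_ : x ∈ g.range) ↦ (hKη x).le
  calc ∫⁻ ω in U, edist (g ω) (h ω) ^ p ∂μ
      ≤ ∫⁻ ω in U, R.indicator (fun _ ↦ B) ω ∂μ := by
        refine setLIntegral_mono' hU.measurableSet fun ω hω ↦ ?_
        by_cases hωR : ω ∈ R
        · rw [indicator_of_mem hωR, hB, edist_dist]
          gcongr
          refine (dist_triangle_right _ _ a).trans (add_le_add ?_ (hb ω))
          exact (hM _ (g.mem_range_self ω)).trans (le_max_left _ _)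
        · have hωK : ω ∈ K (g ω) := by
            by_contra hωK
            exact hωR (mem_biUnion (g.mem_range_self ω) ⟨⟨rfl, hω⟩, hωK⟩)
          rw [hx _ (g.mem_range_self ω) ω hωK, edist_self, ENNReal.zero_rpow_of_pos hp]
          exact zero_le
    _ ≤ ∫⁻ ω, R.indicator (fun _ ↦ B) ω ∂μ := setLIntegral_le_lintegral _ _
    _ = B * μ R := lintegral_indicator_const hR B
    _ ≤ B * (g.range.card * η) := by gcongr
    _ = η * (g.range.card * B) := by ring
    _ < δ := hηδ

/-- A measurable map in `L^p` with values in a separable metric space is approximated in `L^p` by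
simple maps. -/
theorem exists_simpleFunc_lintegral_edist_lt {E X : Type*} [MeasurableSpace E]
    [PseudoMetricSpace X] [SecondCountableTopology X] [MeasurableSpace X] [BorelSpace X]
    {μ : Measure E} {p : ℝ} (hp : 0 < p) {f : E → X} (hf : Measurable f) {a : X}
    (hfa : ∫⁻ ω, edist (f ω) a ^ p ∂μ ≠ ∞) {δ : ℝ≥0∞} (hδ : δ ≠ 0) :
    ∃ g : SimpleFunc E X, ∫⁻ ω, edist (f ω) (g ω) ^ p ∂μ < δ := by
  let g (n : ℕ) : SimpleFunc E X := SimpleFunc.approxOn f hf univ a (mem_univ a) n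
  have hlim : Tendsto (fun n ↦ ∫⁻ ω, edist (f ω) (g n ω) ^ p ∂μ) atTop (𝓝 (∫⁻ _, 0 ∂μ)) := by
    refine tendsto_lintegral_of_dominated_convergence (fun ω ↦ edist (f ω) a ^ p)
      (fun n ↦ (hf.edist (g n).measurable).pow_const p) (fun n ↦ ae_of_all _ fun ω ↦ ?_) hfa
      (ae_of_all _ fun ω ↦ ?_)
    · dsimp only
      gcongr
      rw [edist_comm, edist_comm _ a]
      exact SimpleFunc.edist_approxOn_le hf (mem_univ a) ω n
    · have h := SimpleFunc.tendsto_approxOn hf (mem_univ a) (x := ω) (by simp)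
      have h' := ((tendsto_const_nhds (x := f ω)).edist h).ennrpow_const p
      simpa [ENNReal.zero_rpow_of_pos hp] using h'
  rw [lintegral_zero] at hlim
  obtain ⟨n, hn⟩ := (hlim.eventually_lt_const (pos_iff_ne_zero.2 hδ)).exists
  exact ⟨g n, hn⟩

/-- In a locally compact Hadamard space `X`, every `f ∈ L^p(Ω, X)` can be
approximated arbitrarily well by uniformly continuous maps which are constant outside a
compact subset of `Ω`. -/
theorem Lp_approx_by_uniformly_continuous_constant_outside_compact
    {n : ℕ} (hn : 1 ≤ n)
    (Ω : Set (EuclideanSpace ℝ (Fin n))) (hΩo : IsOpen Ω) (hΩb : Bornology.IsBounded Ω)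
    {X : Type*} [MetricSpace X] [CompleteSpace X] [LocallyCompactSpace X]
    [MeasurableSpace X] [BorelSpace X]
    (hgeo : ∀ x y : X, ∃ γ : ℝ → X, γ 0 = x ∧ γ 1 = y ∧
      ∀ s ∈ Icc (0:ℝ) 1, ∀ t ∈ Icc (0:ℝ) 1, dist (γ s) (γ t) = |s - t| * dist x y)
    (h4 : ∀ x y v w : X, dist x v ^ 2 + dist y w ^ 2 ≤
      dist x w ^ 2 + dist y v ^ 2 + 2 * dist x y * dist v w)
    (p : ℝ) (hp : 1 ≤ p)
    (f : EuclideanSpace ℝ (Fin n) → X) (hf : Measurable f)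
    (a : X) (hfa : ∫⁻ ω in Ω, ENNReal.ofReal (dist (f ω) a ^ p) < ⊤)
    (ε : ℝ) (hε : 0 < ε) :
    ∃ h : EuclideanSpace ℝ (Fin n) → X, UniformContinuousOn h Ω ∧
      (∃ K : Set (EuclideanSpace ℝ (Fin n)), IsCompact K ∧ K ⊆ Ω ∧
        ∃ c : X, ∀ x ∈ Ω \ K, h x = c) ∧
      ∫⁻ ω in Ω, ENNReal.ofReal (dist (f ω) (h ω) ^ p) < ENNReal.ofReal ε := by
  have hp0 : 0 < p := zero_lt_one.trans_le hp
  have hedist (x y : X) : ENNReal.ofReal (dist x y ^ p) = edist x y ^ p := by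
    rw [edist_dist, ENNReal.ofReal_rpow_of_nonneg dist_nonneg hp0.le]
  simp only [hedist] at hfa ⊢
  have hpath (x y : X) : ∃ γ : ℝ → X, γ 0 = x ∧ γ 1 = y ∧ ContinuousOn γ (Icc 0 1) ∧
      ∀ t ∈ Icc (0 : ℝ) 1, dist (γ t) x ≤ dist y x := by
    obtain ⟨γ, h0, h1, hγ⟩ := hgeo x y
    refine ⟨γ, h0, h1, ?_, fun t ht ↦ ?_⟩
    · refine (LipschitzOnWith.of_dist_le_mul (K := nndist x y) fun s hs t ht ↦ ?_).continuousOn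
      rw [hγ s hs t ht, Real.dist_eq, mul_comm, coe_nndist]
    · have h := hγ t ht 0 (by simp)
      rw [h0, sub_zero, abs_of_nonneg ht.1] at h
      rw [h, dist_comm y x]
      exact mul_le_of_le_one_left dist_nonneg ht.2
  have : PreconnectedSpace X := by
    refine ⟨isPreconnected_of_forall_pair fun x _ y _ ↦ ?_⟩
    obtain ⟨γ, h0, h1, hγ, -⟩ := hpath x y
    exact ⟨γ '' Icc 0 1, subset_univ _, ⟨0, by simp, h0⟩, ⟨1, by simp, h1⟩,
      isPreconnected_Icc.image γ hγ⟩
  have : SigmaCompactSpace X := sigmaCompactSpace_of_preconnected_of_paracompact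
  have : SecondCountableTopology X := EMetric.secondCountable_of_sigmaCompact X
  have hc0 : (2 : ℝ≥0∞) ^ (p - 1) ≠ ∞ :=
    ENNReal.rpow_ne_top_of_nonneg (sub_nonneg.2 hp) ENNReal.ofNat_ne_top
  obtain ⟨δ, hδ, hδε⟩ := ENNReal.exists_pos_mul_lt
    (ENNReal.mul_ne_top hc0 ENNReal.ofNat_ne_top : (2 : ℝ≥0∞) ^ (p - 1) * 2 ≠ ∞)
    (ENNReal.ofReal_pos.2 hε).ne'
  obtain ⟨g, hg⟩ := exists_simpleFunc_lintegral_edist_lt hp0 hf hfa.ne hδ.ne'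
  obtain ⟨h, C, hc, hC, hCΩ, ha, hgh⟩ := exists_continuous_lintegral_edist_simpleFunc_lt
    (μ := volume) (hpath a) hΩo hΩb.measure_lt_top.ne hp0 g hδ.ne'
  have huc : UniformContinuous h := by
    refine hc.uniformContinuous_of_tendsto_cocompact (x := a) (tendsto_const_nhds.congr' ?_)
    filter_upwards [hC.compl_mem_cocompact] with ω hω using (ha ω hω).symm
  refine ⟨h, huc.uniformContinuousOn, ⟨C, hC, hCΩ, a, fun ω hω ↦ ha ω hω.2⟩, ?_⟩
  calc ∫⁻ ω in Ω, edist (f ω) (h ω) ^ p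
      ≤ ∫⁻ ω in Ω, 2 ^ (p - 1) * (edist (f ω) (g ω) ^ p + edist (g ω) (h ω) ^ p) := by
        refine lintegral_mono fun ω ↦ ?_
        refine le_trans ?_ (ENNReal.rpow_add_le_mul_rpow_add_rpow _ _ hp)
        gcongr
        exact edist_triangle _ _ _
    _ = 2 ^ (p - 1) * ((∫⁻ ω in Ω, edist (f ω) (g ω) ^ p) + ∫⁻ ω in Ω, edist (g ω) (h ω) ^ p) := by
        rw [lintegral_const_mul' _ _ hc0,
          lintegral_add_left ((hf.edist g.measurable).pow_const p)]
    _ ≤ 2 ^ (p - 1) * (δ + δ) := by gcongr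
    _ = δ * (2 ^ (p - 1) * 2) := by ring
    _ < ENNReal.ofReal ε := hδε
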